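/- Let L be an n×n real matrix, α ∈ ℝ, H > 0, v_0, u_0, …, u_K ∈ ℝ^n, and let v : ℝ → ℝ^n satisfy v(0) = v_0 and, for every t ∈ [0,H], v'(t) = α·L·v(t) + Σ_{k=0}^{K} (t/H)^k u_k. Then v(H) = exp(αH·L)·v_0 + H·Σ_{k=0}^{K} φ_{k+1}(αH·L)·u_k. -/

import Mathlib

/- The elementwise sup norm on matrices, made available locally so that the
matrix-valued integrals below make sense. -/
attribute [local instance] Matrix.normedAddCommGroup Matrix.normedSpace

/-- `φ_{k+1}(M) = ∫_0^1 exp((1−t)M) t^k dt` (matrix-valued integral). -/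
noncomputable def phiMat {n : ℕ} (k : ℕ) (M : Matrix (Fin n) (Fin n) ℝ) :
    Matrix (Fin n) (Fin n) ℝ :=
  ∫ t in (0:ℝ)..1, t ^ k • NormedSpace.exp ((1 - t) • M)

theorem aux_exp_gen {A : Type*} [NormedRing A] [NormedAlgebra ℝ A] [FiniteDimensional ℝ A]
    (M : A) (t : ℝ) (e : A →ₗ[ℝ] ℝ) :
    HasDerivAt (fun s : ℝ => e (NormedSpace.exp (s • M)))
      (e (NormedSpace.exp (t • M) * M)) t := by
  have : CompleteSpace A := FiniteDimensional.complete ℝ A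
  have h := hasDerivAt_exp_smul_const (𝕂 := ℝ) M t
  exact (LinearMap.toContinuousLinearMap e).hasFDerivAt.comp_hasDerivAt t h

theorem aux_exp_deriv {n : ℕ} (M : Matrix (Fin n) (Fin n) ℝ) (t : ℝ) (i j : Fin n) :
    HasDerivAt (fun s : ℝ => (NormedSpace.exp (s • M)) i j)
      ((NormedSpace.exp (t • M) * M) i j) t := by
  let e : Matrix (Fin n) (Fin n) ℝ →ₗ[ℝ] ℝ :=
    { toFun := fun A => A i j, map_add' := fun _ _ => rfl, map_smul' := fun _ _ => rfl }
  exact @aux_exp_gen (Matrix (Fin n) (Fin n) ℝ) Matrix.linftyOpNormedRing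
    Matrix.linftyOpNormedAlgebra (inferInstanceAs (Module.Finite ℝ (Matrix (Fin n) (Fin n) ℝ)))
    M t e

theorem aux_exp_deriv' {n : ℕ} (M : Matrix (Fin n) (Fin n) ℝ) (t : ℝ) (i j : Fin n) :
    HasDerivAt (fun s : ℝ => (NormedSpace.exp ((1 - s) • M)) i j)
      (-((NormedSpace.exp ((1 - t) • M) * M) i j)) t := by
  have h := (aux_exp_deriv M (1 - t) i j).scomp t ((hasDerivAt_id t).const_sub 1)
  simpa [Function.comp_def] using h

theorem aux_exp_cont {n : ℕ} (M : Matrix (Fin n) (Fin n) ℝ) (i j : Fin n) :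
    Continuous (fun s : ℝ => (NormedSpace.exp ((1 - s) • M)) i j) :=
  continuous_iff_continuousAt.2 fun t => (aux_exp_deriv' M t i j).continuousAt

theorem aux_phi {n : ℕ} (k : ℕ) (M : Matrix (Fin n) (Fin n) ℝ) (i j : Fin n) :
    phiMat k M i j = ∫ t in (0:ℝ)..1, t ^ k * (NormedSpace.exp ((1 - t) • M)) i j := by
  let e : Matrix (Fin n) (Fin n) ℝ →ₗ[ℝ] ℝ :=
    { toFun := fun A => A i j, map_add' := fun _ _ => rfl, map_smul' := fun _ _ => rfl }
  have hc : Continuous (fun t : ℝ => t ^ k • NormedSpace.exp ((1 - t) • M)) := by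
    refine (continuous_pow k).smul ?_
    exact continuous_matrix fun i j => aux_exp_cont M i j
  exact ((LinearMap.toContinuousLinearMap e).intervalIntegral_comp_comm
    (hc.intervalIntegrable 0 1)).symm

/-- If `v(0) = v_0` and `v'(t) = α·L·v(t) + Σ_{k=0}^{K} (t/H)^k u_k` on `[0,H]`, then
`v(H) = exp(αH·L)·v_0 + H·Σ_{k=0}^{K} φ_{k+1}(αH·L)·u_k`. -/
theorem stmt2 {n K : ℕ} (L : Matrix (Fin n) (Fin n) ℝ) (α H : ℝ) (hH : 0 < H)
    (v0 : Fin n → ℝ) (u : Fin (K + 1) → Fin n → ℝ) (v : ℝ → Fin n → ℝ)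
    (hv0 : v 0 = v0)
    (hv : ∀ t ∈ Set.Icc (0:ℝ) H,
      HasDerivAt v (α • L.mulVec (v t) + ∑ k : Fin (K + 1), (t / H) ^ (k : ℕ) • u k) t) :
    v H = (NormedSpace.exp ((α * H) • L)).mulVec v0
      + H • ∑ k : Fin (K + 1), (phiMat (k : ℕ) ((α * H) • L)).mulVec (u k) := by
  set M := (α * H) • L with hM
  funext i
  have hvs : ∀ s ∈ Set.Icc (0:ℝ) 1, ∀ j, HasDerivAt (fun s : ℝ => v (H * s) j)
      (M.mulVec (v (H * s)) j + H * ∑ k : Fin (K + 1), s ^ (k : ℕ) * u k j) s := by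
    intro s hs j
    have h1 := hv (H * s) ⟨by have := hs.1; positivity, by nlinarith [hs.2]⟩
    have h2 := (hasDerivAt_pi.1 h1 j).scomp s ((hasDerivAt_id s).const_mul H)
    refine h2.congr_deriv ?_
    have : H * s / H = s := by field_simp
    simp only [this, hM, Matrix.smul_mulVec, Pi.add_apply, Pi.smul_apply, Finset.sum_apply,
      smul_eq_mul]
    ring
  have hw : ∀ s ∈ Set.uIcc (0:ℝ) 1, HasDerivAt
      (fun s : ℝ => (NormedSpace.exp ((1 - s) • M)).mulVec (v (H * s)) i)
      (∑ j, ∑ k : Fin (K + 1),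
        H * ((s ^ (k : ℕ) * (NormedSpace.exp ((1 - s) • M)) i j) * u k j)) s := by
    intro s hs
    rw [Set.uIcc_of_le zero_le_one] at hs
    have h := HasDerivAt.fun_sum (u := Finset.univ) (fun j _ =>
      (aux_exp_deriv' M s i j).mul (hvs s hs j))
    refine h.congr_deriv ?_
    have key : ∑ j, (NormedSpace.exp ((1 - s) • M) * M) i j * v (H * s) j
        = ∑ j, (NormedSpace.exp ((1 - s) • M)) i j * M.mulVec (v (H * s)) j := by
      have := congrFun (Matrix.mulVec_mulVec (v (H * s)) (NormedSpace.exp ((1 - s) • M)) M) i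
      exact this.symm
    simp only [mul_add, Finset.sum_add_distrib, neg_mul, Finset.sum_neg_distrib, key]
    rw [neg_add_cancel_left]
    refine Finset.sum_congr rfl fun j _ => ?_
    rw [Finset.mul_sum, Finset.mul_sum]
    exact Finset.sum_congr rfl fun k _ => by ring
  have hci : ∀ (j : Fin n) (k : Fin (K + 1)), Continuous (fun s : ℝ =>
      H * ((s ^ (k : ℕ) * (NormedSpace.exp ((1 - s) • M)) i j) * u k j)) := fun j k =>
    continuous_const.mul (((continuous_pow _).mul (aux_exp_cont M i j)).mul continuous_const)
  have hF := intervalIntegral.integral_eq_sub_of_hasDerivAt hw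
    ((continuous_finsetSum _ fun j _ => continuous_finsetSum _ fun k _ =>
      hci j k).intervalIntegrable 0 1)
  rw [intervalIntegral.integral_finsetSum (fun j _ => (continuous_finsetSum _ fun k _ =>
      hci j k).intervalIntegrable 0 1)] at hF
  have hI : ∀ j, (∫ s in (0:ℝ)..1, ∑ k : Fin (K + 1),
        H * ((s ^ (k : ℕ) * (NormedSpace.exp ((1 - s) • M)) i j) * u k j))
      = ∑ k : Fin (K + 1), H * (phiMat (k : ℕ) M i j * u k j) := by
    intro j
    rw [intervalIntegral.integral_finsetSum (fun k _ => (hci j k).intervalIntegrable 0 1)]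
    refine Finset.sum_congr rfl fun k _ => ?_
    rw [intervalIntegral.integral_const_mul, intervalIntegral.integral_mul_const, aux_phi]
  simp only [hI, sub_self, zero_smul, NormedSpace.exp_zero, Matrix.one_mulVec, mul_one,
    mul_zero, sub_zero, one_smul, hv0] at hF
  rw [Finset.sum_comm] at hF
  simp only [Pi.add_apply, Pi.smul_apply, Finset.sum_apply, smul_eq_mul, Matrix.mulVec, dotProduct,
    Finset.mul_sum] at hF ⊢
  linarith
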